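/- Let f : {-1,1}^n → [-1,1] be symmetric of degree d with n > d². Then f(x) = p((x_1+⋯+x_n)/n) for a unique univariate polynomial p of degree at most d, and ‖p‖_∞ (the sup over [-1,1]) is at most n/(n − d²). -/

import Mathlib

open Finset

/-- The Fourier character χ_S evaluated at a point of the Boolean cube
(coordinates encoded by `Bool`, with `true ↦ 1` and `false ↦ -1`). -/
noncomputable def char {n : ℕ} (S : Finset (Fin n)) (x : Fin n → Bool) : ℝ :=
  ∏ i ∈ S, (if x i then (1 : ℝ) else -1)

/-- The multilinear polynomial with Fourier coefficients `c`, evaluated on the cube. -/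
noncomputable def eval' {n : ℕ} (c : Finset (Fin n) → ℝ) (x : Fin n → Bool) : ℝ :=
  ∑ S : Finset (Fin n), c S * char S x

/-- Flip the i-th coordinate. -/
def flipAt {n : ℕ} (x : Fin n → Bool) (i : Fin n) : Fin n → Bool :=
  Function.update x i (!(x i))

/-- Expectation over the uniform measure on the cube. -/
noncomputable def Ex {n : ℕ} (g : (Fin n → Bool) → ℝ) : ℝ :=
  (∑ x : Fin n → Bool, g x) / 2 ^ n

noncomputable def bval (b : Bool) : ℝ := if b then 1 else -1

/-!
Averaging the multilinear expansion over coordinate permutations turns each character into a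
multiple of an elementary symmetric polynomial of signs. By Newton's identities this is a
polynomial in the power sums, and a power sum of signs is their sum or their number, according to
the parity of the exponent.

For the bound, let `|p|` attain its maximum `‖p‖` over `[-1, 1]` at `y₀`. Some grid point lies
within `1 / n` of `y₀`, so Markov's inequality gives `‖p‖ ≤ 1 + (d² / n) ‖p‖`.

Markov's inequality follows from its endpoint case `|p'(1)| ≤ d² M`, which is the extremality of
the Chebyshev polynomials. Applied to `B² - 2 (1 - x²) r²`, the endpoint case yields Schur's
inequality for `r` at `1`, and a dilation yields it on all of `[-1, 1]`. The odd part of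
`φ ↦ p (cos (θ + φ))` has the form `sin φ * b (cos φ)`, so Schur's inequality for `b` at `1` is
Bernstein's inequality for `p`. Schur's inequality for the derivative then gives Markov's
inequality.
-/

section MarkovInequality

open Polynomial

variable {p r : ℝ[X]} {d : ℕ} {M B : ℝ}

lemma abs_eval_one_derivative_le (hp : p.natDegree ≤ d)
    (hM : ∀ x ∈ Set.Icc (-1) 1, |p.eval x| ≤ M) :
    |(derivative p).eval 1| ≤ d ^ 2 * M := by
  have normalized : ∀ q : ℝ[X], q.natDegree ≤ d → (∀ x ∈ Set.Icc (-1) 1, |q.eval x| ≤ 1) →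
      (derivative q).eval 1 ≤ d ^ 2 := fun q hq hbound => by
    simpa [Chebyshev.derivative_T_eval_one] using
      Chebyshev.eval_iterate_derivative_le_of_forall_abs_le_one (k := 1) le_rfl
        (natDegree_le_iff_degree_le.mp hq) hbound
  have hM_nonneg : 0 ≤ M := (abs_nonneg _).trans (hM 0 (by simp))
  rcases hM_nonneg.eq_or_lt with rfl | hM_pos
  · have hzero : p = 0 := eq_zero_of_infinite_isRoot p <|
      (Set.Icc_infinite (show (-1 : ℝ) < 1 by norm_num)).mono fun x hx =>
        abs_nonpos_iff.mp (hM x hx)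
    simp [hzero]
  · have scaled : ∀ c : ℝ, |c| = 1 → c * (derivative p).eval 1 ≤ d ^ 2 * M := fun c hc => by
      have := normalized (C (c / M) * p) ((natDegree_C_mul_le _ _).trans hp) fun x hx => by
        rw [eval_C_mul, abs_mul, abs_div, hc, abs_of_pos hM_pos, one_div_mul_eq_div]
        exact div_le_one_of_le₀ (hM x hx) hM_nonneg
      rwa [derivative_C_mul, eval_C_mul, div_mul_eq_mul_div, div_le_iff₀ hM_pos] at this
    exact abs_le'.mpr ⟨by simpa using scaled 1 (by simp), by simpa using scaled (-1) (by simp)⟩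

lemma abs_eval_one_le_of_abs_sin_mul_eval_cos_le (hr : r.degree < d)
    (hB : ∀ φ : ℝ, |Real.sin φ * r.eval (Real.cos φ)| ≤ B) : |r.eval 1| ≤ d * B := by
  have hB_nonneg : 0 ≤ B := (abs_nonneg _).trans (hB 0)
  rcases eq_or_ne r 0 with rfl | hr_ne
  · simpa using mul_nonneg d.cast_nonneg hB_nonneg
  -- On `[-1, 1]` the polynomial `P` takes values in `[-B², B²]`, and `P' 1 = 4 (r 1)²`.
  set P : ℝ[X] := C (B ^ 2) - C 2 * (1 - X ^ 2) * r ^ 2 with hP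
  have hP_natDegree : P.natDegree ≤ 2 * d := by
    have hr_natDegree : r.natDegree < d := (natDegree_lt_iff_degree_lt hr_ne).mpr hr
    have : P.natDegree ≤ 2 + 2 * r.natDegree := by
      rw [hP]
      compute_degree
    omega
  have hP_bound : ∀ x ∈ Set.Icc (-1) 1, |P.eval x| ≤ B ^ 2 := fun x ⟨hx₁, hx₂⟩ => by
    have hsq := sq_le_sq' (abs_le.mp (hB (Real.arccos x))).1 (abs_le.mp (hB (Real.arccos x))).2
    rw [mul_pow, Real.sin_sq, Real.cos_arccos hx₁ hx₂] at hsq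
    have hnonneg : 0 ≤ (1 - x ^ 2) * r.eval x ^ 2 :=
      mul_nonneg (by nlinarith) (sq_nonneg _)
    simp only [hP, eval_sub, eval_mul, eval_C, eval_one, eval_pow, eval_X]
    exact abs_le.mpr ⟨by linarith, by linarith⟩
  have hP_derivative : (derivative P).eval 1 = (2 * r.eval 1) ^ 2 := by
    simp only [hP, derivative_sub, derivative_mul, derivative_C, derivative_one, derivative_X,
      derivative_pow, eval_sub, eval_add, eval_mul, eval_C, eval_one, eval_pow, eval_X, eval_zero]
    ring
  have hsq : (2 * r.eval 1) ^ 2 ≤ (2 * (d * B)) ^ 2 := by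
    rw [← hP_derivative]
    calc (derivative P).eval 1 ≤ ((2 * d : ℕ) : ℝ) ^ 2 * B ^ 2 :=
          (le_abs_self _).trans (abs_eval_one_derivative_le hP_natDegree hP_bound)
      _ = (2 * (d * B)) ^ 2 := by push_cast; ring
  have := abs_le_of_sq_le_sq hsq (by positivity)
  rw [abs_mul, abs_two] at this
  linarith

lemma abs_eval_le_of_abs_sin_mul_eval_cos_le (hr : r.degree < d)
    (hB : ∀ φ : ℝ, |Real.sin φ * r.eval (Real.cos φ)| ≤ B) {x : ℝ} (hx : x ∈ Set.Icc (-1) 1) :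
    |r.eval x| ≤ d * B := by
  -- The hypothesis on `r` passes to the dilation `t ↦ r (x t)`, since `1 - t² ≤ 1 - (x t)²`.
  have hdilate_degree : (r.comp (C x * X)).degree < d := by
    rw [degree_lt_iff_coeff_zero] at hr ⊢
    intro m hm
    rw [comp_C_mul_X_coeff, hr m hm, zero_mul]
  have hdilate_bound (φ : ℝ) : |Real.sin φ * (r.comp (C x * X)).eval (Real.cos φ)| ≤ B := by
    set y := x * Real.cos φ with hy
    have hy_sq : y ^ 2 ≤ Real.cos φ ^ 2 := by
      rw [hy, mul_pow]
      exact mul_le_of_le_one_left (sq_nonneg _) (sq_le_one_iff_abs_le_one x |>.mpr (abs_le.mpr hx))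
    obtain ⟨hy₁, hy₂⟩ := abs_le.mp <| (sq_le_one_iff_abs_le_one y).mp
      (hy_sq.trans (Real.cos_sq_le_one φ))
    have hsin : |Real.sin φ| ≤ |Real.sin (Real.arccos y)| := by
      rw [← sq_le_sq, Real.sin_sq, Real.sin_sq, Real.cos_arccos hy₁ hy₂]
      linarith
    calc |Real.sin φ * (r.comp (C x * X)).eval (Real.cos φ)|
        = |Real.sin φ| * |r.eval y| := by simp [abs_mul, hy]
      _ ≤ |Real.sin (Real.arccos y)| * |r.eval y| := by gcongr
      _ = |Real.sin (Real.arccos y) * r.eval (Real.cos (Real.arccos y))| := by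
          rw [Real.cos_arccos hy₁ hy₂, abs_mul]
      _ ≤ B := hB _
  simpa using abs_eval_one_le_of_abs_sin_mul_eval_cos_le hdilate_degree hdilate_bound

lemma exists_eval_cos_sub_sub_eval_cos_add_eq (hp : p.natDegree ≤ d) (θ : ℝ) :
    ∃ b : ℝ[X], b.degree < d ∧ ∀ φ : ℝ,
      p.eval (Real.cos (θ - φ)) - p.eval (Real.cos (θ + φ)) =
        Real.sin φ * b.eval (Real.cos φ) := by
  have hspan : p ∈ Submodule.span ℝ (Chebyshev.chebyshevTsequence ℝ '' Set.Iio (d + 1)) := by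
    rw [Sequence.span_degreeLT _ (by simp), degreeLT_succ_eq_degreeLE, mem_degreeLE]
    exact natDegree_le_iff_degree_le.mp hp
  clear hp
  induction hspan using Submodule.span_induction with
  | zero => exact ⟨0, by simp, by simp⟩
  | add p₁ p₂ _ _ ih₁ ih₂ =>
    obtain ⟨b₁, hb₁_degree, hb₁⟩ := ih₁
    obtain ⟨b₂, hb₂_degree, hb₂⟩ := ih₂
    refine ⟨b₁ + b₂, (degree_add_le _ _).trans_lt (max_lt hb₁_degree hb₂_degree), fun φ => ?_⟩
    simp only [eval_add]
    linear_combination hb₁ φ + hb₂ φ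
  | smul c p _ ih =>
    obtain ⟨b, hb_degree, hb⟩ := ih
    refine ⟨c • b, (degree_smul_le _ _).trans_lt hb_degree, fun φ => ?_⟩
    simp only [eval_smul, smul_eq_mul]
    linear_combination c * hb φ
  | mem p hp =>
    obtain ⟨k, hk, rfl⟩ := hp
    refine ⟨C (2 * Real.sin (k * θ)) * Chebyshev.U ℝ (k - 1), ?_, fun φ => ?_⟩
    · cases k with
      | zero => simp
      | succ m =>
        rw [Nat.cast_succ (R := ℤ), add_sub_cancel_right, ← smul_eq_C_mul]
        refine (degree_smul_le _ _).trans_lt ?_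
        rw [Chebyshev.degree_U_natCast]
        exact_mod_cast Nat.succ_lt_succ_iff.mp hk
    · have hU := Chebyshev.U_real_cos φ (k - 1 : ℤ)
      push_cast at hU
      rw [sub_add_cancel] at hU
      change (Chebyshev.T ℝ k).eval _ - (Chebyshev.T ℝ k).eval _ = _
      rw [Chebyshev.T_real_cos, Chebyshev.T_real_cos, Int.cast_natCast, mul_sub, mul_add,
        Real.cos_sub, Real.cos_add, eval_C_mul]
      linear_combination (-2 * Real.sin (k * θ)) * hU

lemma abs_sin_mul_eval_cos_derivative_le (hp : p.natDegree ≤ d)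
    (hM : ∀ x ∈ Set.Icc (-1) 1, |p.eval x| ≤ M) (θ : ℝ) :
    |Real.sin θ * (derivative p).eval (Real.cos θ)| ≤ d * M := by
  obtain ⟨b, hb_degree, hb⟩ := exists_eval_cos_sub_sub_eval_cos_add_eq hp θ
  have hb_bound (φ : ℝ) : |Real.sin φ * b.eval (Real.cos φ)| ≤ 2 * M := by
    rw [← hb]
    calc _ ≤ _ := abs_sub _ _
      _ ≤ 2 * M := by
        linarith [hM _ (Real.cos_mem_Icc (θ - φ)), hM _ (Real.cos_mem_Icc (θ + φ))]
  have hderiv_left : HasDerivAt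
      (fun φ => p.eval (Real.cos (θ - φ)) - p.eval (Real.cos (θ + φ)))
      (2 * (Real.sin θ * (derivative p).eval (Real.cos θ))) 0 := by
    have hsub := (p.hasDerivAt _).comp 0 ((hasDerivAt_id (0 : ℝ)).const_sub θ).cos
    have hadd := (p.hasDerivAt _).comp 0 ((hasDerivAt_id (0 : ℝ)).const_add θ).cos
    refine (hsub.sub hadd).congr_deriv ?_
    simp only [id, sub_zero, add_zero]
    ring
  have hderiv_right : HasDerivAt (fun φ => Real.sin φ * b.eval (Real.cos φ)) (b.eval 1) 0 :=
    ((Real.hasDerivAt_sin 0).mul ((b.hasDerivAt _).comp 0 (Real.hasDerivAt_cos 0))).congr_deriv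
      (by simp)
  have hb_one : 2 * (Real.sin θ * (derivative p).eval (Real.cos θ)) = b.eval 1 :=
    hderiv_left.unique (funext hb ▸ hderiv_right)
  have := abs_eval_one_le_of_abs_sin_mul_eval_cos_le hb_degree hb_bound
  rw [← hb_one, abs_mul, abs_two] at this
  linarith

lemma abs_eval_derivative_le (hp : p.natDegree ≤ d)
    (hM : ∀ x ∈ Set.Icc (-1) 1, |p.eval x| ≤ M) {x : ℝ} (hx : x ∈ Set.Icc (-1) 1) :
    |(derivative p).eval x| ≤ d ^ 2 * M := by
  have hdegree : (derivative p).degree < d := by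
    rw [degree_lt_iff_coeff_zero]
    intro m hm
    rw [coeff_derivative, coeff_eq_zero_of_natDegree_lt (by omega), zero_mul]
  calc |(derivative p).eval x| ≤ d * (d * M) :=
        abs_eval_le_of_abs_sin_mul_eval_cos_le hdegree
          (abs_sin_mul_eval_cos_derivative_le hp hM) hx
    _ = d ^ 2 * M := by ring

lemma abs_eval_le_of_forall_exists_abs_sub_le {δ : ℝ} (hp : p.natDegree ≤ d)
    (hδ : d ^ 2 * δ < 1)
    (hnet : ∀ y ∈ Set.Icc (-1) 1, ∃ z ∈ Set.Icc (-1) 1, |y - z| ≤ δ ∧ |p.eval z| ≤ M)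
    {y : ℝ} (hy : y ∈ Set.Icc (-1) 1) : |p.eval y| ≤ M / (1 - d ^ 2 * δ) := by
  obtain ⟨y₀, hy₀, hmax⟩ := (isCompact_Icc (a := (-1 : ℝ)) (b := 1)).exists_isMaxOn
    ⟨y, hy⟩ (f := fun x => |p.eval x|) (by fun_prop)
  obtain ⟨z, hz, hy₀z, hpz⟩ := hnet y₀ hy₀
  have hlipschitz : |p.eval y₀ - p.eval z| ≤ d ^ 2 * |p.eval y₀| * |y₀ - z| :=
    (convex_Icc (-1 : ℝ) 1).norm_image_sub_le_of_norm_hasDerivWithin_le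
      (fun x _ => (p.hasDerivAt x).hasDerivWithinAt)
      (fun x hx => abs_eval_derivative_le hp hmax hx) hz hy₀
  have hself : |p.eval y₀| ≤ M + d ^ 2 * |p.eval y₀| * δ :=
    calc |p.eval y₀| = |p.eval z + (p.eval y₀ - p.eval z)| := by rw [add_sub_cancel]
      _ ≤ |p.eval z| + |p.eval y₀ - p.eval z| := abs_add_le _ _
      _ ≤ M + d ^ 2 * |p.eval y₀| * |y₀ - z| := add_le_add hpz hlipschitz
      _ ≤ M + d ^ 2 * |p.eval y₀| * δ := by gcongr
  refine (hmax hy).trans ?_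
  rw [le_div_iff₀ (by linarith)]
  linarith

end MarkovInequality

section Symmetrization

open Polynomial

lemma card_smul_sum_smul_eq {G X A : Type*} [Group G] [Fintype G] [MulAction G X] [Fintype X]
    [MulAction.IsPretransitive G X] [AddCommMonoid A] (f : X → A) (x : X) :
    Fintype.card X • ∑ g : G, f (g • x) = Fintype.card G • ∑ y, f y := by
  have hbase (y : X) : ∑ g : G, f (g • x) = ∑ g : G, f (g • y) := by
    obtain ⟨h, rfl⟩ := MulAction.exists_smul_eq G x y
    simpa only [smul_smul, Equiv.coe_mulRight] using
      (Equiv.sum_comp (Equiv.mulRight h) fun g => f (g • x)).symm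
  calc Fintype.card X • ∑ g : G, f (g • x) = ∑ _y : X, ∑ g : G, f (g • x) := by simp
    _ = ∑ g : G, ∑ y, f (g • y) := (sum_congr rfl fun y _ => hbase y).trans sum_comm
    _ = ∑ _g : G, ∑ y, f y :=
      sum_congr rfl fun g _ => Equiv.sum_comp (MulAction.toPerm g) f
    _ = Fintype.card G • ∑ y, f y := by simp

lemma exists_eval_psum_eq_eval_sum {ι R : Type*} [Fintype ι] [CommSemiring R] (j : ℕ) :
    ∃ s : R[X], s.natDegree ≤ 1 ∧ ∀ x : ι → R, (∀ i, x i ^ 2 = 1) →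
      MvPolynomial.eval x (MvPolynomial.psum ι R j) = s.eval (∑ i, x i) := by
  rcases j.even_or_odd' with ⟨m, rfl | rfl⟩
  · exact ⟨C (Fintype.card ι : R), by simp, fun x hx => by
      simp [MvPolynomial.psum, pow_mul, hx]⟩
  · exact ⟨X, natDegree_X_le, fun x hx => by simp [MvPolynomial.psum, pow_add, pow_mul, hx]⟩

variable {ι K : Type*} [Fintype ι] [Field K] [CharZero K]

lemma exists_eval_esymm_eq_eval_sum (k : ℕ) :
    ∃ q : K[X], q.natDegree ≤ k ∧ ∀ x : ι → K, (∀ i, x i ^ 2 = 1) →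
      MvPolynomial.eval x (MvPolynomial.esymm ι K k) = q.eval (∑ i, x i) := by
  induction k using Nat.strong_induction_on with
  | h k ih =>
    rcases Nat.eq_zero_or_pos k with rfl | hk
    · exact ⟨1, by simp, by simp⟩
    choose! q hq_natDegree hq using ih
    choose s hs_natDegree hs using exists_eval_psum_eq_eval_sum (ι := ι) (R := K)
    refine ⟨C ((-1) ^ (k + 1) / (k : K)) *
      ∑ a ∈ antidiagonal k with a.1 < k, (-1) ^ a.1 * q a.1 * s a.2, ?_, fun x hx => ?_⟩
    · refine (natDegree_C_mul_le _ _).trans (natDegree_sum_le_of_forall_le _ _ fun a ha => ?_)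
      have ha_lt : a.1 < k := (mem_filter.mp ha).2
      calc ((-1) ^ a.1 * q a.1 * s a.2).natDegree
          ≤ ((-1) ^ a.1 * q a.1).natDegree + (s a.2).natDegree := natDegree_mul_le
        _ ≤ a.1 + 1 := by
          refine add_le_add ?_ (hs_natDegree _)
          rw [← C_1, ← C_neg, ← C_pow]
          exact (natDegree_C_mul_le _ _).trans (hq_natDegree _ ha_lt)
        _ ≤ k := ha_lt
    · have hnewton := congrArg (MvPolynomial.eval x) (MvPolynomial.mul_esymm_eq_sum ι K k)
      simp only [map_mul, map_natCast, map_sum, map_pow, map_neg, map_one] at hnewton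
      rw [eval_C_mul, eval_finsetSum, div_mul_eq_mul_div,
        eq_div_iff (Nat.cast_ne_zero.mpr hk.ne'), mul_comm, hnewton]
      refine congrArg _ (sum_congr rfl fun a ha => ?_)
      simp [hq a.1 (mem_filter.mp ha).2 x hx, hs a.2 x hx]

lemma exists_sum_perm_prod_eq_eval_sum [DecidableEq ι] (S : Finset ι) :
    ∃ q : K[X], q.natDegree ≤ #S ∧ ∀ x : ι → K, (∀ i, x i ^ 2 = 1) →
      ∑ σ : Equiv.Perm ι, ∏ i ∈ S, x (σ i) = q.eval (∑ i, x i) := by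
  obtain ⟨q, hq_natDegree, hq⟩ := exists_eval_esymm_eq_eval_sum (ι := ι) (K := K) #S
  have := Set.powersetCard.isPretransitive (α := ι) (n := #S)
  let S' : Set.powersetCard ι #S := ⟨S, rfl⟩
  let N : K := Fintype.card (Set.powersetCard ι #S)
  have hN : N ≠ 0 := Nat.cast_ne_zero.mpr (Fintype.card_pos_iff.mpr ⟨S'⟩).ne'
  refine ⟨C (Fintype.card (Equiv.Perm ι) / N) * q, (natDegree_C_mul_le _ _).trans hq_natDegree,
    fun x hx => ?_⟩
  have horbit := card_smul_sum_smul_eq (G := Equiv.Perm ι)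
    (fun T : Set.powersetCard ι #S => ∏ i ∈ (T : Finset ι), x i) S'
  have hsmul (σ : Equiv.Perm ι) : ∏ i ∈ ((σ • S' : Set.powersetCard ι #S) : Finset ι), x i =
      ∏ i ∈ S, x (σ i) := by
    rw [Set.powersetCard.coe_smul, Finset.smul_finset_def, prod_image (MulAction.injective σ).injOn]
    rfl
  have hesymm : ∑ T : Set.powersetCard ι #S, ∏ i ∈ (T : Finset ι), x i = q.eval (∑ i, x i) := by
    simp only [← hq x hx, MvPolynomial.esymm, map_sum, map_prod, MvPolynomial.eval_X]
    exact (sum_subtype (powersetCard #S univ) (fun _ => mem_powersetCard_univ)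
      fun T => ∏ i ∈ T, x i).symm
  simp only [hsmul, hesymm, nsmul_eq_mul] at horbit
  rw [eval_C_mul, div_mul_eq_mul_div, eq_div_iff hN, mul_comm, horbit]

end Symmetrization

section Cube

open Polynomial

variable {n d : ℕ}

lemma abs_bval (b : Bool) : |bval b| = 1 := by
  cases b <;> simp [bval]

lemma bval_sq (b : Bool) : bval b ^ 2 = 1 := by
  rw [← sq_abs, abs_bval, one_pow]

lemma exists_sum_bval_eq {k : ℕ} (hk : k ≤ n) :
    ∃ x : Fin n → Bool, ∑ i, bval (x i) = 2 * k - n := by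
  obtain ⟨A, -, hA⟩ := exists_subset_card_eq (s := (univ : Finset (Fin n))) (by simpa using hk)
  have hbval (i : Fin n) : bval (decide (i ∈ A)) = 2 * (if i ∈ A then 1 else 0) - 1 := by
    by_cases hi : i ∈ A
    · norm_num [bval, hi]
    · simp [bval, hi]
  refine ⟨fun i => decide (i ∈ A), ?_⟩
  simp [hbval, sum_sub_distrib, hA, mul_comm]

lemma exists_abs_sub_sum_bval_div_le (hn : 0 < n) {y : ℝ} (hy : y ∈ Set.Icc (-1) 1) :
    ∃ x : Fin n → Bool, |y - (∑ i, bval (x i)) / n| ≤ 1 / n := by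
  have hn' : (0 : ℝ) < n := Nat.cast_pos.mpr hn
  set t : ℝ := n * (y + 1) / 2 with ht
  have ht_nonneg : 0 ≤ t := by
    have := hy.1
    have : 0 ≤ y + 1 := by linarith
    positivity
  have ht_le : t ≤ n := by
    have := hy.2
    nlinarith
  have hk_le : ⌊t + 1 / 2⌋₊ ≤ n :=
    Nat.lt_succ_iff.mp <| (Nat.floor_lt (by positivity)).mpr (by push_cast; linarith)
  obtain ⟨x, hx⟩ := exists_sum_bval_eq hk_le
  refine ⟨x, ?_⟩
  have hlower := Nat.floor_le (a := t + 1 / 2) (by positivity)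
  have hupper := Nat.lt_floor_add_one (t + 1 / 2)
  have hy_eq : y = (2 * t - n) / n := by
    rw [ht]
    field
  rw [hx, hy_eq, ← sub_div, abs_div, abs_of_pos hn']
  gcongr
  exact abs_le.mpr ⟨by linarith, by linarith⟩

lemma sum_bval_div_mem_Icc (x : Fin n → Bool) : (∑ i, bval (x i)) / n ∈ Set.Icc (-1 : ℝ) 1 := by
  have habs : |∑ i, bval (x i)| ≤ n :=
    calc |∑ i, bval (x i)| ≤ ∑ i, |bval (x i)| := abs_sum_le_sum_abs _ _
      _ = n := by simp [abs_bval]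
  refine abs_le.mp ?_
  rw [abs_div, Nat.abs_cast]
  exact div_le_one_of_le₀ habs n.cast_nonneg

lemma exists_eval'_eq_eval_sum_bval {c : Finset (Fin n) → ℝ} (hdeg : ∀ S, c S ≠ 0 → #S ≤ d)
    (hsym : ∀ x y : Fin n → Bool, ∑ i, bval (x i) = ∑ i, bval (y i) → eval' c x = eval' c y) :
    ∃ q : ℝ[X], q.natDegree ≤ d ∧ ∀ x, eval' c x = q.eval (∑ i, bval (x i)) := by
  choose q hq_natDegree hq using fun S : Finset (Fin n) =>
    exists_sum_perm_prod_eq_eval_sum (K := ℝ) S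
  refine ⟨C (n.factorial : ℝ)⁻¹ * ∑ S, C (c S) * q S, ?_, fun x => ?_⟩
  · refine (natDegree_C_mul_le _ _).trans (natDegree_sum_le_of_forall_le _ _ fun S _ => ?_)
    by_cases hS : c S = 0
    · simp [hS]
    · exact (natDegree_C_mul_le _ _).trans ((hq_natDegree S).trans (hdeg S hS))
  · have hperm (σ : Equiv.Perm (Fin n)) : eval' c (x ∘ σ) = eval' c x :=
      hsym _ _ (Equiv.sum_comp σ fun i => bval (x i))
    have hsum : n.factorial * eval' c x = ∑ S, c S * (q S).eval (∑ i, bval (x i)) :=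
      calc n.factorial * eval' c x = ∑ σ : Equiv.Perm (Fin n), eval' c (x ∘ σ) := by
            simp [hperm, Fintype.card_perm]
        _ = ∑ S, c S * ∑ σ : Equiv.Perm (Fin n), ∏ i ∈ S, bval (x (σ i)) := by
            simp only [mul_sum]
            exact sum_comm
        _ = ∑ S, c S * (q S).eval (∑ i, bval (x i)) := by
            simp only [hq _ (fun i => bval (x i)) fun _ => bval_sq _]
    simp only [eval_C_mul, eval_finsetSum, ← hsum]
    field

lemma eq_of_forall_eval_sum_bval_div_eq {p q : ℝ[X]} (hn : 0 < n) (hp : p.natDegree ≤ n)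
    (hq : q.natDegree ≤ n)
    (h : ∀ x : Fin n → Bool,
      p.eval ((∑ i, bval (x i)) / n) = q.eval ((∑ i, bval (x i)) / n)) : p = q := by
  have hn' : (n : ℝ) ≠ 0 := Nat.cast_ne_zero.mpr hn.ne'
  have hdegree {r : ℝ[X]} (hr : r.natDegree ≤ n) : r.degree < #(range (n + 1)) := by
    rw [card_range]
    exact degree_le_natDegree.trans_lt (by exact_mod_cast Nat.lt_succ_of_le hr)
  refine eq_of_degrees_lt_of_eval_index_eq (range (n + 1)) (v := fun k : ℕ => (2 * k - n) / n)
    (fun a _ b _ hab => ?_) (hdegree hp) (hdegree hq) fun k hk => ?_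
  · simpa [div_left_inj' hn'] using hab
  · obtain ⟨x, hx⟩ := exists_sum_bval_eq (mem_range_succ_iff.mp hk)
    rw [← hx, h]

end Cube

theorem symmetric_polynomial_bound (n d : ℕ) (c : Finset (Fin n) → ℝ)
    (hdeg : ∀ S, c S ≠ 0 → S.card ≤ d)
    (hbd : ∀ x, |eval' c x| ≤ 1)
    (hsym : ∀ x y : Fin n → Bool,
      (∑ i, bval (x i)) = (∑ i, bval (y i)) → eval' c x = eval' c y)
    (hn : (d : ℝ) ^ 2 < n) :
    ∃ p : Polynomial ℝ,
      (p.natDegree ≤ d ∧ ∀ x, eval' c x = p.eval ((∑ i, bval (x i)) / n)) ∧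
      (∀ q : Polynomial ℝ,
        (q.natDegree ≤ d ∧ ∀ x, eval' c x = q.eval ((∑ i, bval (x i)) / n)) → q = p) ∧
      (∀ y : ℝ, |y| ≤ 1 → |p.eval y| ≤ (n : ℝ) / ((n : ℝ) - (d : ℝ) ^ 2)) := by
  have hd : d < n := (Nat.le_self_pow two_ne_zero d).trans_lt (by exact_mod_cast hn)
  have hn_pos : 0 < n := d.zero_le.trans_lt hd
  have hn' : (0 : ℝ) < n := Nat.cast_pos.mpr hn_pos
  obtain ⟨r, hr_natDegree, hr⟩ := exists_eval'_eq_eval_sum_bval hdeg hsym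
  set p : Polynomial ℝ := r.comp (.C (n : ℝ) * .X) with hp_def
  have hp_natDegree : p.natDegree ≤ d := by
    rwa [hp_def, Polynomial.natDegree_comp, Polynomial.natDegree_C_mul_X _ hn'.ne', mul_one]
  have hp (x : Fin n → Bool) : eval' c x = p.eval ((∑ i, bval (x i)) / n) := by
    simp [hp_def, hr, mul_div_cancel₀ _ hn'.ne']
  refine ⟨p, ⟨hp_natDegree, hp⟩, fun q ⟨hq_natDegree, hq⟩ => ?_, fun y hy => ?_⟩
  · exact eq_of_forall_eval_sum_bval_div_eq hn_pos (hq_natDegree.trans hd.le)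
      (hp_natDegree.trans hd.le) fun x => by rw [← hq, ← hp]
  · have hbound := abs_eval_le_of_forall_exists_abs_sub_le (M := 1) (δ := 1 / n) hp_natDegree
      (by rwa [mul_one_div, div_lt_one hn']) (fun z hz => ?_) (abs_le.mp hy)
    · convert hbound using 1
      field
    · obtain ⟨x, hx⟩ := exists_abs_sub_sum_bval_div_le hn_pos hz
      exact ⟨_, sum_bval_div_mem_Icc x, hx, hp x ▸ hbd x⟩
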